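/- Let C be a braided monoidal category in which coequalizers are preserved by the monoidal product. Let (t₁,t₂,t₃,t₄,e₁,e₂,j) and (t₁,t₂,t₃,t₄,e₁′,e₂′,j′) be regular weak multiplier bimonoids on the same object A such that the induced multiplications m := (j⊗1)∘t₁ and m′ := (j′⊗1)∘t₁ are equal, are regular epimorphisms, and are non-degenerate with respect to some class of objects containing I, A and A⊗A. Then the following are equivalent: (i) e₁ = e₁′; (ii) e₂ = e₂′; (iii) g = g′ (the morphisms of Lemma 5.1 for the two structures); (iv) j = j′. Moreover, these equivalent conditions hold if in addition idempotent morphisms in C split and the morphisms d̂₁ (or d̂₂) of both structures are epimorphisms. -/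

import Mathlib

open CategoryTheory Category MonoidalCategory Limits

universe v u

namespace WeakMultiplierBimonoid

variable {C : Type u} [Category.{v} C] [MonoidalCategory C] [BraidedCategory C]

def wl {A : C} (f : A ⊗ A ⟶ A ⊗ A) : A ⊗ (A ⊗ A) ⟶ A ⊗ (A ⊗ A) :=
  (α_ A A A).inv ≫ (f ▷ A) ≫ (α_ A A A).hom

def ml {A : C} (f : A ⊗ A ⟶ A) : A ⊗ (A ⊗ A) ⟶ A ⊗ A :=
  (α_ A A A).inv ≫ (f ▷ A)

def NdLeftOn {Z V W : C} (v : Z ⊗ V ⟶ W) (𝒴 : Set C) : Prop :=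
  ∀ (X : C), ∀ Y ∈ 𝒴, Function.Injective
    (fun g : X ⟶ V ⊗ Y => (Z ◁ g) ≫ (α_ Z V Y).inv ≫ (v ▷ Y))

def NdRightOn {Z V W : C} (v : Z ⊗ V ⟶ W) (𝒴 : Set C) : Prop :=
  NdLeftOn ((β_ V Z).hom ≫ v) 𝒴

/-- The "middle braiding" `1 ⊗ c ⊗ 1 : A⁴ ⟶ A⁴` on `(A ⊗ A) ⊗ (A ⊗ A)`. -/
def midSw (A : C) : (A ⊗ A) ⊗ (A ⊗ A) ⟶ (A ⊗ A) ⊗ (A ⊗ A) :=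
  (α_ A A (A ⊗ A)).hom ≫ (A ◁ (α_ A A A).inv) ≫ (A ◁ ((β_ A A).hom ▷ A)) ≫
    (A ◁ (α_ A A A).hom) ≫ (α_ A A (A ⊗ A)).inv

/-- A regular weak multiplier bimonoid on an object `A` of a braided monoidal category,
with multiplication non-degenerate with respect to the class `𝒴`
(Definition 2.9 of the paper). -/
structure RWMB (A : C) (𝒴 : Set C) where
  t₁ : A ⊗ A ⟶ A ⊗ A
  t₂ : A ⊗ A ⟶ A ⊗ A
  t₃ : A ⊗ A ⟶ A ⊗ A
  t₄ : A ⊗ A ⟶ A ⊗ A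
  e₁ : A ⊗ A ⟶ A ⊗ A
  e₂ : A ⊗ A ⟶ A ⊗ A
  j : A ⟶ 𝟙_ C
  /-- the induced multiplication -/
  m : A ⊗ A ⟶ A
  /-- counit condition (m1); in particular `m` is the induced multiplication -/
  hm₁ : m = t₁ ≫ (j ▷ A) ≫ (λ_ A).hom
  /-- counit condition (m2) -/
  hm₂ : m = t₂ ≫ (A ◁ j) ≫ (ρ_ A).hom
  /-- counit condition (m3) -/
  hm₃ : m = (β_ A A).hom ≫ t₃ ≫ (j ▷ A) ≫ (λ_ A).hom
  /-- counit condition (m4) -/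
  hm₄ : m = (β_ A A).hom ≫ t₄ ≫ (A ◁ j) ≫ (ρ_ A).hom
  /-- the class `𝒴` contains the monoidal unit -/
  memI : (𝟙_ C) ∈ 𝒴
  memA : A ∈ 𝒴
  memAA : (A ⊗ A) ∈ 𝒴
  /-- `m` is non-degenerate on the left with respect to `𝒴` -/
  ndl : NdLeftOn m 𝒴
  /-- `m` is non-degenerate on the right with respect to `𝒴` -/
  ndr : NdRightOn m 𝒴
  /-- relation (c12) -/
  hc12 : (A ◁ t₁) ≫ ml m = wl t₂ ≫ (A ◁ m)
  /-- relation (c13) -/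
  hc13 : wl t₁ ≫ (A ◁ (β_ A A).hom) ≫ (A ◁ m)
    = (A ◁ (β_ A A).hom) ≫ wl t₃ ≫ (A ◁ m)
  /-- relation (c14) -/
  hc14 : (A ◁ t₁) ≫ wl (β_ A A).hom ≫ ml m = wl t₄ ≫ (A ◁ m)
  /-- relation (c23) -/
  hc23 : wl t₂ ≫ (A ◁ (β_ A A).hom) ≫ (A ◁ m) = (A ◁ t₃) ≫ ml m
  /-- relation (c24) -/
  hc24 : (A ◁ t₂) ≫ wl (β_ A A).hom ≫ ml m = wl (β_ A A).hom ≫ (A ◁ t₄) ≫ ml m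
  /-- relation (c34) -/
  hc34 : (A ◁ t₃) ≫ wl (β_ A A).hom ≫ ml m = wl t₄ ≫ (A ◁ (β_ A A).hom) ≫ (A ◁ m)
  /-- interchange relation for `(t₂, t₁)` -/
  hi21 : (A ◁ t₁) ≫ wl t₂ = wl t₂ ≫ (A ◁ t₁)
  /-- interchange relation for `(t₄, t₁)` -/
  hi41 : (A ◁ t₁) ≫ wl t₄ = wl t₄ ≫ (A ◁ t₁)
  /-- interchange relation for `(t₂, t₃)` -/
  hi23 : (A ◁ t₃) ≫ wl t₂ = wl t₂ ≫ (A ◁ t₃)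
  /-- interchange relation for `(t₄, t₃)` -/
  hi43 : (A ◁ t₃) ≫ wl t₄ = wl t₄ ≫ (A ◁ t₃)
  /-- compatibility of the idempotents `e₁`, `e₂`:
  `(m ⊗ m) ∘ (1 ⊗ c ⊗ 1) ∘ (1 ⊗ 1 ⊗ e₁) = (m ⊗ m) ∘ (1 ⊗ c ⊗ 1) ∘ (e₂ ⊗ 1 ⊗ 1)` -/
  hecomp : ((A ⊗ A) ◁ e₁) ≫ midSw A ≫ (m ▷ (A ⊗ A)) ≫ (A ◁ m)
    = (e₂ ▷ (A ⊗ A)) ≫ midSw A ≫ (m ▷ (A ⊗ A)) ≫ (A ◁ m)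
  /-- Axiom I for the weakly counital fusion morphism `(t₁, e₁, j)` -/
  ax1 : (A ◁ t₁) ≫ wl (β_ A A).hom ≫ (A ◁ t₁) ≫ wl (β_ A A).inv ≫ wl t₁
    = wl t₁ ≫ (A ◁ t₁)
  /-- Axiom II -/
  ax2 : e₁ ≫ e₁ = e₁
  /-- Axiom III -/
  ax3 : t₁ ≫ e₁ = t₁
  /-- Axiom IV -/
  ax4 : (A ◁ e₁) ≫ (A ◁ (β_ A A).inv) ≫ wl t₁ ≫ (A ◁ (β_ A A).hom) ≫ ml m
    = (A ◁ (β_ A A).inv) ≫ wl t₁ ≫ (A ◁ (β_ A A).hom) ≫ ml m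
  /-- Axiom V -/
  ax5 : (A ◁ t₁) ≫ wl e₁ = wl e₁ ≫ (A ◁ t₁)
  /-- Axiom VI -/
  ax6 : wl t₁ ≫ (A ◁ e₁)
    = (A ◁ (β_ A A).inv) ≫ wl e₁ ≫ (A ◁ (β_ A A).hom) ≫ wl t₁
  /-- Axiom VII -/
  ax7 : wl t₁ ≫ (A ◁ ((j ▷ A) ≫ (λ_ A).hom)) ≫ m
    = (A ◁ (β_ A A).hom) ≫ (A ◁ e₁) ≫ (A ◁ ((A ◁ j) ≫ (ρ_ A).hom)) ≫ m
  /-- Axiom VIII -/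
  ax8 : wl t₁ ≫ (A ◁ (β_ A A).hom) ≫ ml m ≫ (j ▷ A) ≫ (λ_ A).hom
    = (A ◁ (β_ A A).hom) ≫ (A ◁ e₁) ≫ (A ◁ ((j ▷ A) ≫ (λ_ A).hom)) ≫ m

namespace RWMB

variable {A : C} {𝒴 : Set C} (S : RWMB A 𝒴)

/-- `⊓ᴸ₁ := (j ⊗ 1) ∘ e₁`. -/
def piL1 : A ⊗ A ⟶ A := S.e₁ ≫ (S.j ▷ A) ≫ (λ_ A).hom

/-- `⊓ᴸ₂ := (j ⊗ 1) ∘ t₄ ∘ c`. -/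
def piL2 : A ⊗ A ⟶ A := (β_ A A).hom ≫ S.t₄ ≫ (S.j ▷ A) ≫ (λ_ A).hom

/-- `⊓̄ᴿ₁ ∘ c⁻¹ = (1 ⊗ j) ∘ e₁`, the second leg of the coequalizer defining the base
object. -/
def piBarR1c : A ⊗ A ⟶ A := S.e₁ ≫ (A ◁ S.j) ≫ (ρ_ A).hom

end RWMB


/-- `⊓̄ᴿ₂ := (1 ⊗ j) ∘ t₁`. -/
def RWMB.piBarR2 {A : C} {𝒴 : Set C} (S : RWMB A 𝒴) : A ⊗ A ⟶ A :=
  S.t₁ ≫ (A ◁ S.j) ≫ (ρ_ A).hom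

/-- `d₁ := (m ⊗ 1) ∘ (1 ⊗ c) ∘ (t₁ ⊗ 1) ∘ (1 ⊗ c⁻¹) : A ⊗ A ⊗ A ⟶ A ⊗ A`. -/
def dOne {A : C} (m : A ⊗ A ⟶ A) (t₁ : A ⊗ A ⟶ A ⊗ A) : A ⊗ (A ⊗ A) ⟶ A ⊗ A :=
  (A ◁ (β_ A A).inv) ≫ wl t₁ ≫ (A ◁ (β_ A A).hom) ≫ ml m

/-!
Write `q := (1 ⊗ j) ∘ e₁` and `p := (1 ⊗ j) ∘ t₁`. Axiom V gives
`(1 ⊗ m) ∘ (e₁ ⊗ 1) = (q ⊗ 1) ∘ (1 ⊗ t₁)`, so by non-degeneracy `e₁` is determined by `q`, while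
Axiom VII expresses `m ∘ (1 ⊗ q)` through `p`. Hence `j` determines `e₁`. Comparing the same
identity with the defining equation of `g`, which is a morphism of right modules, yields
`(m ⊗ 1) ∘ (1 ⊗ e₁) = d₁(g)`, where `d₁(f)` is `d₁` with `t₁` replaced by `f`; so `e₁` and `g`
determine each other. Applying the counit to either factor recovers `p` and `(j ⊗ 1) ∘ t₂`
from `g`. Since (c12) makes `t₂` common to both structures, `g = g'` gives
`j ∘ m = (j ⊗ j') ∘ t₂ = (j ⊗ j') ∘ g = (j ⊗ j') ∘ t₁ = j' ∘ m`.

For the last assertion, `d₁` absorbs `e₁` on both sides: `e₁ ∘ d₁ = d₁ = d₁ ∘ (1 ⊗ e₁)`. On the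
left, with `d̂₁` epi, this gives `e₁' ∘ e₁ = e₁`; on the right, with Axiom VII for `e₁'`, it gives
`q' ∘ e₁ = q'`. Thus `(1 ⊗ j') ∘ e₁ = q' ∘ e₁ = q'`, which determines `e₁`.
-/

theorem epi_map_of_regularEpi {D E : Type*} [Category* D] [Category* E] (F : D ⥤ E)
    [PreservesColimitsOfShape WalkingParallelPair F] {X Y : D} {f : X ⟶ Y} (r : RegularEpi f) :
    Epi (F.map f) :=
  Cofork.IsColimit.epi (isColimitCoforkMapOfIsColimit F r.w r.isColimit)

section Monoidal

omit [BraidedCategory C]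

section Contraction

/-- The functional `j` applied to the left factor, `j ⊗ 1 : A ⊗ X ⟶ X`. -/
def contractLeft {A : C} (j : A ⟶ 𝟙_ C) (X : C) : A ⊗ X ⟶ X := j ▷ X ≫ (λ_ X).hom

/-- The functional `j` applied to the right factor, `1 ⊗ j : X ⊗ A ⟶ X`. -/
def contractRight {A : C} (j : A ⟶ 𝟙_ C) (X : C) : X ⊗ A ⟶ X := X ◁ j ≫ (ρ_ X).hom

variable {A B X Y : C} (j : A ⟶ 𝟙_ C)

theorem whiskerLeft_contractLeft (f : X ⟶ Y) :
    A ◁ f ≫ contractLeft j Y = contractLeft j X ≫ f := by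
  simp [contractLeft, whisker_exchange_assoc]

theorem whiskerRight_contractRight (f : X ⟶ Y) :
    f ▷ A ≫ contractRight j Y = contractRight j X ≫ f := by
  simp [contractRight, ← whisker_exchange_assoc]

theorem contractLeft_comp (k : B ⟶ 𝟙_ C) :
    contractLeft j B ≫ k = contractRight k A ≫ j := by
  rw [← whiskerLeft_contractLeft, ← whiskerRight_contractRight]
  simp only [contractLeft, contractRight, whisker_exchange_assoc, unitors_equal]

theorem wl_contractLeft (f : A ⊗ A ⟶ A ⊗ A) :
    wl f ≫ contractLeft j (A ⊗ A) = ml (f ≫ contractLeft j A) := by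
  simp [wl, ml, contractLeft]

theorem wl_whiskerLeft_contractLeft (f : A ⊗ A ⟶ A ⊗ A) :
    wl f ≫ A ◁ contractLeft j A = ml (f ≫ contractRight j A) := by
  simp [wl, ml, contractLeft, contractRight]

theorem ml_contractLeft (f : A ⊗ A ⟶ A) :
    ml f ≫ contractLeft j A = (α_ A A A).inv ≫ contractLeft (f ≫ j) A := by
  simp [ml, contractLeft]

theorem ml_contractRight (f : A ⊗ A ⟶ A) :
    ml f ≫ contractRight j A = A ◁ contractRight j A ≫ f := by
  rw [ml, assoc, whiskerRight_contractRight]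
  simp [contractRight]

end Contraction

section FourFactors

variable {A : C}

/-- The rebracketing `(A ⊗ (A ⊗ A)) ⊗ A ≅ A ⊗ (A ⊗ (A ⊗ A))`. -/
def rebracket (A : C) : (A ⊗ (A ⊗ A)) ⊗ A ≅ A ⊗ (A ⊗ (A ⊗ A)) :=
  α_ A (A ⊗ A) A ≪≫ whiskerLeftIso A (α_ A A A)

/-- The action `f ⊗ 1 ⊗ 1` of `f` on the first two of four factors. -/
def onFirstTwo (f : A ⊗ A ⟶ A ⊗ A) : A ⊗ (A ⊗ (A ⊗ A)) ⟶ A ⊗ (A ⊗ (A ⊗ A)) :=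
  (α_ A A (A ⊗ A)).inv ≫ f ▷ (A ⊗ A) ≫ (α_ A A (A ⊗ A)).hom

theorem associator_inv_whisker_exchange {B D E P : C} (k : A ⊗ B ⟶ P) (f : E ⟶ D) :
    A ◁ B ◁ f ≫ (α_ A B D).inv ≫ k ▷ D = (α_ A B E).inv ≫ k ▷ E ≫ P ◁ f := by
  rw [associator_inv_naturality_right_assoc, whisker_exchange]

theorem onFirstTwo_exchange (k f : A ⊗ A ⟶ A ⊗ A) :
    A ◁ A ◁ f ≫ onFirstTwo k = onFirstTwo k ≫ A ◁ A ◁ f := by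
  unfold onFirstTwo
  rw [reassoc_of% (associator_inv_whisker_exchange k f)]
  simp

theorem rebracket_inv_wl_whiskerRight (f : A ⊗ A ⟶ A ⊗ A) :
    (rebracket A).inv ≫ wl f ▷ A = onFirstTwo f ≫ (rebracket A).inv := by
  simp [rebracket, wl, onFirstTwo]

theorem wl_whiskerRight_rebracket (f : A ⊗ A ⟶ A ⊗ A) :
    wl f ▷ A ≫ (rebracket A).hom = (rebracket A).hom ≫ onFirstTwo f := by
  rw [← Iso.inv_comp_eq, reassoc_of% rebracket_inv_wl_whiskerRight, Iso.inv_hom_id, comp_id]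

theorem whiskerLeft_ml_ml (q k : A ⊗ A ⟶ A) :
    A ◁ ml q ≫ ml k = (rebracket A).inv ≫ (A ◁ q ≫ k) ▷ A := by
  simp [rebracket, ml]

theorem whiskerLeft_ml_whiskerRight (f : A ⊗ A ⟶ A ⊗ A) (k m : A ⊗ A ⟶ A) :
    (A ◁ f ≫ ml k) ▷ A ≫ (α_ A A A).hom ≫ A ◁ m
      = (rebracket A).hom ≫ A ◁ (wl f ≫ A ◁ m) ≫ ml k := by
  simp only [ml, MonoidalCategory.whiskerLeft_comp, assoc]
  rw [associator_inv_whisker_exchange k m]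
  simp [rebracket, wl]

theorem rebracket_whiskerLeft_mul {m : A ⊗ A ⟶ A} (hm : ml m ≫ m = A ◁ m ≫ m) :
    (rebracket A).hom ≫ A ◁ (A ◁ m ≫ m)
      = (α_ A (A ⊗ A) A).hom ≫ A ◁ m ▷ A ≫ A ◁ m := by
  simp [← hm, rebracket, ml]

end FourFactors

theorem NdLeftOn.eq_of_whiskerLeft {Z V W X : C} {𝒴 : Set C} {v : Z ⊗ V ⟶ W}
    (hv : NdLeftOn v 𝒴) (hI : 𝟙_ C ∈ 𝒴) {f f' : X ⟶ V} (H : Z ◁ f ≫ v = Z ◁ f' ≫ v) :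
    f = f' := by
  rw [← cancel_mono (ρ_ V).inv]
  apply hv X _ hI
  simpa [← rightUnitor_inv_naturality] using H =≫ (ρ_ W).inv

end Monoidal

section NonDegenerate

variable {Z V W X Y : C} {𝒴 : Set C}

theorem whiskerLeft_braiding_inv_slide (V Y Z : C) :
    V ◁ (β_ Z Y).inv ≫ (α_ V Z Y).inv ≫ (β_ V Z).hom ▷ Y
      = (β_ V (Y ⊗ Z)).hom ≫ (α_ Y Z V).hom ≫ (β_ (Z ⊗ V) Y).inv := by
  rw [← cancel_mono (β_ (Z ⊗ V) Y).hom, ← cancel_epi (V ◁ (β_ Z Y).hom)]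
  simpa using BraidedCategory.yang_baxter V Z Y

theorem whiskerLeft_braiding_hom_slide (V Y Z : C) :
    V ◁ (β_ Y Z).hom ≫ (α_ V Z Y).inv ≫ (β_ Z V).inv ▷ Y
      = (β_ (Y ⊗ Z) V).inv ≫ (α_ Y Z V).hom ≫ (β_ Y (Z ⊗ V)).hom := by
  rw [← cancel_epi ((α_ Y Z V).inv ≫ (β_ (Y ⊗ Z) V).hom),
    ← cancel_mono ((β_ Z V).hom ▷ Y ≫ (α_ V Z Y).hom)]
  simpa using (BraidedCategory.yang_baxter Y Z V).symm

theorem whiskerLeft_comp_braiding_inv (v : Z ⊗ V ⟶ W) (h : X ⟶ Y ⊗ Z) :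
    V ◁ (h ≫ (β_ Z Y).inv) ≫ (α_ V Z Y).inv ≫ ((β_ V Z).hom ≫ v) ▷ Y
      = (β_ V X).hom ≫ h ▷ V ≫ (α_ Y Z V).hom ≫ Y ◁ v ≫ (β_ W Y).inv := by
  rw [← BraidedCategory.braiding_naturality_right_assoc,
    BraidedCategory.braiding_inv_naturality_right,
    ← reassoc_of% (whiskerLeft_braiding_inv_slide V Y Z)]
  simp only [MonoidalCategory.whiskerLeft_comp, comp_whiskerRight, assoc]

theorem whiskerLeft_comp_braiding_hom (v : Z ⊗ V ⟶ W) (h : X ⟶ Y ⊗ Z) :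
    V ◁ (h ≫ (β_ Y Z).hom) ≫ (α_ V Z Y).inv ≫ ((β_ Z V).inv ≫ v) ▷ Y
      = (β_ X V).inv ≫ h ▷ V ≫ (α_ Y Z V).hom ≫ Y ◁ v ≫ (β_ Y W).hom := by
  rw [← BraidedCategory.braiding_inv_naturality_right_assoc,
    BraidedCategory.braiding_naturality_right,
    ← reassoc_of% (whiskerLeft_braiding_hom_slide V Y Z)]
  simp only [MonoidalCategory.whiskerLeft_comp, comp_whiskerRight, assoc]

theorem NdRightOn.eq_of_whiskerRight_tensor {v : Z ⊗ V ⟶ W} (hv : NdRightOn v 𝒴) (hY : Y ∈ 𝒴)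
    {h h' : X ⟶ Y ⊗ Z}
    (H : h ▷ V ≫ (α_ Y Z V).hom ≫ Y ◁ v = h' ▷ V ≫ (α_ Y Z V).hom ≫ Y ◁ v) : h = h' := by
  rw [← cancel_mono (β_ Z Y).inv]
  apply hv X Y hY
  dsimp only
  rw [whiskerLeft_comp_braiding_inv, whiskerLeft_comp_braiding_inv, reassoc_of% H]

theorem NdRightOn.eq_of_whiskerRight {v : Z ⊗ V ⟶ W} (hv : NdRightOn v 𝒴) (hI : 𝟙_ C ∈ 𝒴)
    {f f' : X ⟶ Z} (H : f ▷ V ≫ v = f' ▷ V ≫ v) : f = f' := by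
  rw [← cancel_mono (λ_ Z).inv]
  apply hv.eq_of_whiskerRight_tensor hI
  simpa [← leftUnitor_inv_naturality] using H =≫ (λ_ W).inv

theorem NdRightOn.ndLeftOn_braiding_inv {v : Z ⊗ V ⟶ W} (hv : NdRightOn v 𝒴) :
    NdLeftOn ((β_ Z V).inv ≫ v) 𝒴 := by
  intro X Y hY f f' H
  have slide := fun k : X ⟶ Z ⊗ Y => whiskerLeft_comp_braiding_hom v (k ≫ (β_ Y Z).inv)
  simp only [assoc, Iso.inv_hom_id, comp_id] at slide
  rw [← cancel_mono (β_ Y Z).inv]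
  apply hv.eq_of_whiskerRight_tensor hY
  rw [← cancel_epi (β_ X V).inv, ← cancel_mono (β_ Y W).hom]
  simpa only [slide, assoc] using H

end NonDegenerate

section Braiding

variable {A : C}

theorem whiskerLeft_braiding_inv_ml (k : A ⊗ A ⟶ A) :
    A ◁ (β_ A A).inv ≫ ml k = wl (β_ A A).hom ≫ A ◁ k ≫ (β_ A A).inv := by
  rw [BraidedCategory.braiding_inv_naturality_right]
  simp [wl, ml]

theorem whiskerLeft_braiding_hom_ml (k : A ⊗ A ⟶ A) :
    A ◁ (β_ A A).hom ≫ ml k = wl (β_ A A).inv ≫ A ◁ k ≫ (β_ A A).hom := by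
  rw [BraidedCategory.braiding_naturality_right]
  simp [wl, ml]

theorem wl_braiding_conj (f : A ⊗ A ⟶ A ⊗ A) :
    A ◁ (β_ A A).inv ≫ wl f ≫ A ◁ (β_ A A).hom
      = wl (β_ A A).hom ≫ A ◁ f ≫ wl (β_ A A).inv := by
  calc A ◁ (β_ A A).inv ≫ wl f ≫ A ◁ (β_ A A).hom
      = wl (β_ A A).hom ≫ (β_ (A ⊗ A) A).inv ≫ (f ▷ A ≫ (β_ (A ⊗ A) A).hom) ≫
          wl (β_ A A).inv := by
        simp [wl, -BraidedCategory.braiding_naturality_left]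
    _ = wl (β_ A A).hom ≫ A ◁ f ≫ wl (β_ A A).inv := by
        rw [BraidedCategory.braiding_naturality_left, assoc, Iso.inv_hom_id_assoc]

theorem yang_baxter_inv (X Y Z : C) :
    (α_ Z Y X).inv ≫ (β_ Y Z).inv ▷ X ≫ (α_ Y Z X).hom ≫ Y ◁ (β_ X Z).inv ≫
      (α_ Y X Z).inv ≫ (β_ X Y).inv ▷ Z ≫ (α_ X Y Z).hom
    = Z ◁ (β_ X Y).inv ≫ (α_ Z X Y).inv ≫ (β_ X Z).inv ▷ Y ≫ (α_ X Z Y).hom ≫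
      X ◁ (β_ Y Z).inv := by
  simpa using congrArg Iso.inv (BraidedCategory.yang_baxter_iso X Y Z)

/-- The multiplication `m ∘ c⁻¹` of the opposite algebra. -/
def opMul (m : A ⊗ A ⟶ A) : A ⊗ A ⟶ A := (β_ A A).inv ≫ m

theorem whiskerLeft_opMul_mul {m : A ⊗ A ⟶ A} (hm : ml m ≫ m = A ◁ m ≫ m) :
    A ◁ opMul m ≫ m = wl (β_ A A).hom ≫ A ◁ m ≫ opMul m := by
  rw [opMul, MonoidalCategory.whiskerLeft_comp, assoc, ← hm,
    reassoc_of% (whiskerLeft_braiding_inv_ml m)]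

theorem opMul_assoc {m : A ⊗ A ⟶ A} (hm : ml m ≫ m = A ◁ m ≫ m) :
    ml (opMul m) ≫ opMul m = A ◁ opMul m ≫ opMul m := by
  have right_nat := BraidedCategory.braiding_inv_naturality_right A m
  have left_nat := BraidedCategory.braiding_inv_naturality_left m A
  simp only [BraidedCategory.braiding_tensor_right_inv, BraidedCategory.braiding_tensor_left_inv,
    assoc] at right_nat left_nat
  simp only [ml, opMul, comp_whiskerRight, MonoidalCategory.whiskerLeft_comp, assoc] at hm ⊢
  rw [reassoc_of% right_nat, reassoc_of% left_nat, hm, ← reassoc_of% (yang_baxter_inv A A A)]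

theorem dOne_eq (m : A ⊗ A ⟶ A) (f : A ⊗ A ⟶ A ⊗ A) :
    dOne m f = wl (β_ A A).hom ≫ A ◁ f ≫ ml (opMul m) := by
  rw [dOne, reassoc_of% (wl_braiding_conj f)]
  simp [wl, ml, opMul]

theorem dOne_contractRight (m : A ⊗ A ⟶ A) (f : A ⊗ A ⟶ A ⊗ A) (j : A ⟶ 𝟙_ C) :
    dOne m f ≫ contractRight j A
      = wl (β_ A A).hom ≫ A ◁ (f ≫ contractRight j A) ≫ opMul m := by
  simp only [dOne_eq, assoc, ml_contractRight, MonoidalCategory.whiskerLeft_comp]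

theorem whiskerLeft_ml_wl_braiding (n : A ⊗ A ⟶ A) :
    A ◁ ml n ≫ wl (β_ A A).hom = onFirstTwo (β_ A A).hom ≫ A ◁ wl (β_ A A).hom ≫
      (α_ A A (A ⊗ A)).inv ≫ n ▷ (A ⊗ A) := by
  have regroup (b : A ⊗ A ⟶ A ⊗ A) : A ◁ ml n ≫ wl b
      = (rebracket A).inv ≫ (A ◁ n ≫ b) ▷ A ≫ (α_ A A A).hom := by
    simp [rebracket, ml, wl]
  rw [regroup, BraidedCategory.braiding_naturality_right]
  simp [rebracket, wl, onFirstTwo]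

theorem whiskerLeft_ml_opMul_ml {m : A ⊗ A ⟶ A} (hm : ml m ≫ m = A ◁ m ≫ m)
    (f : A ⊗ A ⟶ A ⊗ A) :
    A ◁ (A ◁ f ≫ ml (opMul m)) ≫ ml m
      = onFirstTwo (β_ A A).hom ≫ A ◁ (A ◁ f ≫ ml m) ≫ ml (opMul m) := by
  simp only [MonoidalCategory.whiskerLeft_comp, assoc]
  rw [← reassoc_of% onFirstTwo_exchange, whiskerLeft_ml_ml, whiskerLeft_ml_ml,
    whiskerLeft_opMul_mul hm, comp_whiskerRight, reassoc_of% rebracket_inv_wl_whiskerRight]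

theorem whiskerLeft_ml_opMul_dOne {m : A ⊗ A ⟶ A} (hm : ml m ≫ m = A ◁ m ≫ m)
    (f : A ⊗ A ⟶ A ⊗ A) :
    A ◁ ml (opMul m) ≫ dOne m f
      = onFirstTwo (β_ A A).hom ≫ A ◁ dOne m f ≫ ml (opMul m) := by
  have opMul_twice : (α_ A A (A ⊗ A)).inv ≫ opMul m ▷ (A ⊗ A) ≫ ml (opMul m)
      = A ◁ ml (opMul m) ≫ ml (opMul m) := by
    rw [whiskerLeft_ml_ml, ← opMul_assoc hm]
    simp [rebracket, ml]
  simp only [dOne_eq, MonoidalCategory.whiskerLeft_comp, assoc]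
  rw [reassoc_of% whiskerLeft_ml_wl_braiding,
    ← reassoc_of% (associator_inv_whisker_exchange (opMul m) f), opMul_twice]

theorem whiskerLeft_midSw (m : A ⊗ A ⟶ A) (e : A ⊗ A ⟶ A ⊗ A) :
    (A ⊗ A) ◁ e ≫ midSw A ≫ m ▷ (A ⊗ A) ≫ A ◁ m
      = (α_ A A (A ⊗ A)).hom ≫
        A ◁ (A ◁ (e ≫ (β_ A A).inv) ≫ ml m ≫ (β_ A A).hom) ≫ ml m := by
  have wl_mul : wl (β_ A A).hom ≫ A ◁ m = A ◁ (β_ A A).inv ≫ ml m ≫ (β_ A A).hom := by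
    rw [reassoc_of% whiskerLeft_braiding_inv_ml, Iso.inv_hom_id, comp_id]
  rw [MonoidalCategory.whiskerLeft_comp A e, assoc, ← wl_mul]
  simp only [ml, MonoidalCategory.whiskerLeft_comp, assoc, associator_inv_whisker_exchange]
  simp [wl, midSw]

theorem whiskerRight_midSw (m : A ⊗ A ⟶ A) (e : A ⊗ A ⟶ A ⊗ A) :
    e ▷ (A ⊗ A) ≫ midSw A ≫ m ▷ (A ⊗ A) ≫ A ◁ m
      = (α_ (A ⊗ A) A A).inv ≫ ((e ≫ (β_ A A).inv) ▷ A ≫ (α_ A A A).hom ≫ A ◁ m ≫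
        (β_ A A).hom) ▷ A ≫ (α_ A A A).hom ≫ A ◁ m := by
  have mul_braiding : (β_ A A).inv ▷ A ≫ (α_ A A A).hom ≫ A ◁ m ≫ (β_ A A).hom
      = (α_ A A A).hom ≫ A ◁ (β_ A A).hom ≫ ml m := by
    rw [whiskerLeft_braiding_hom_ml]
    simp [wl]
  rw [comp_whiskerRight e, assoc, mul_braiding]
  simp [ml, midSw]

end Braiding

namespace RWMB

variable {A : C} {𝒴 : Set C} (S : RWMB A 𝒴)

theorem eq_of_whiskerLeft_ml {X : C} {f f' : X ⟶ A ⊗ A}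
    (H : A ◁ f ≫ ml S.m = A ◁ f' ≫ ml S.m) : f = f' :=
  S.ndl X A S.memA H

theorem eq_of_whiskerLeft_ml_opMul {X : C} {f f' : X ⟶ A ⊗ A}
    (H : A ◁ f ≫ ml (opMul S.m) = A ◁ f' ≫ ml (opMul S.m)) : f = f' :=
  S.ndr.ndLeftOn_braiding_inv X A S.memA H

theorem eq_of_whiskerRight_mul {X : C} {f f' : X ⟶ A ⊗ A}
    (H : f ▷ A ≫ (α_ A A A).hom ≫ A ◁ S.m = f' ▷ A ≫ (α_ A A A).hom ≫ A ◁ S.m) : f = f' :=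
  S.ndr.eq_of_whiskerRight_tensor S.memA H

theorem eq_of_wl_mul {f f' : A ⊗ A ⟶ A ⊗ A} (H : wl f ≫ A ◁ S.m = wl f' ≫ A ◁ S.m) :
    f = f' :=
  S.eq_of_whiskerRight_mul (by simpa [wl] using H)

theorem whiskerLeft_midSw_injective : Function.Injective
    fun e : A ⊗ A ⟶ A ⊗ A => (A ⊗ A) ◁ e ≫ midSw A ≫ S.m ▷ (A ⊗ A) ≫ A ◁ S.m := by
  intro e e' H
  simp only [whiskerLeft_midSw, cancel_epi] at H
  rw [← cancel_mono (β_ A A).inv]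
  apply S.eq_of_whiskerLeft_ml
  rw [← cancel_mono (β_ A A).hom, assoc, assoc]
  exact S.eq_of_whiskerLeft_ml H

theorem whiskerRight_midSw_injective : Function.Injective
    fun e : A ⊗ A ⟶ A ⊗ A => e ▷ (A ⊗ A) ≫ midSw A ≫ S.m ▷ (A ⊗ A) ≫ A ◁ S.m := by
  intro e e' H
  simp only [whiskerRight_midSw, cancel_epi] at H
  rw [← cancel_mono (β_ A A).inv]
  apply S.eq_of_whiskerRight_mul
  rw [← cancel_mono (β_ A A).hom]
  simpa only [assoc] using S.eq_of_whiskerRight_mul H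

theorem e₁_eq_iff_e₂_eq {S S' : RWMB A 𝒴} (hm : S.m = S'.m) :
    S.e₁ = S'.e₁ ↔ S.e₂ = S'.e₂ := by
  rw [← S.whiskerLeft_midSw_injective.eq_iff, ← S.whiskerRight_midSw_injective.eq_iff]
  simp only [S.hecomp]
  rw [hm, S'.hecomp]

theorem t₁_contractLeft : S.t₁ ≫ contractLeft S.j A = S.m := S.hm₁.symm

theorem t₂_contractRight : S.t₂ ≫ contractRight S.j A = S.m := S.hm₂.symm

theorem mul_assoc : ml S.m ≫ S.m = A ◁ S.m ≫ S.m := by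
  have wl_t₁ : wl S.t₁ ≫ contractLeft S.j (A ⊗ A) = ml S.m := by
    rw [wl_contractLeft, t₁_contractLeft]
  have ax8 : wl S.t₁ ≫ A ◁ (β_ A A).hom ≫ ml S.m ≫ contractLeft S.j A
      = A ◁ (β_ A A).hom ≫ A ◁ S.e₁ ≫ A ◁ contractLeft S.j A ≫ S.m := S.ax8
  calc ml S.m ≫ S.m
      = wl S.t₁ ≫ A ◁ S.t₁ ≫ contractLeft S.j (A ⊗ A) ≫ contractLeft S.j A := by
        rw [reassoc_of% (whiskerLeft_contractLeft S.j S.t₁), t₁_contractLeft, reassoc_of% wl_t₁]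
    _ = A ◁ S.t₁ ≫ wl (β_ A A).hom ≫ A ◁ S.t₁ ≫ wl (β_ A A).inv ≫ ml S.m ≫
          contractLeft S.j A := by
        rw [← reassoc_of% S.ax1, reassoc_of% wl_t₁]
    _ = A ◁ S.t₁ ≫ A ◁ S.e₁ ≫ A ◁ contractLeft S.j A ≫ S.m := by
        rw [← reassoc_of% (wl_braiding_conj S.t₁), ax8, whiskerLeft_inv_hom_assoc]
    _ = A ◁ S.m ≫ S.m := by
        simp only [← MonoidalCategory.whiskerLeft_comp_assoc]
        rw [reassoc_of% S.ax3, t₁_contractLeft]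

theorem wl_t₁_mul : wl S.t₁ ≫ A ◁ S.m = A ◁ S.m ≫ S.t₁ := by
  apply S.eq_of_whiskerLeft_ml
  rw [← cancel_epi (rebracket A).hom]
  calc (rebracket A).hom ≫ A ◁ (wl S.t₁ ≫ A ◁ S.m) ≫ ml S.m
      = (wl S.t₂ ≫ A ◁ S.m) ▷ A ≫ (α_ A A A).hom ≫ A ◁ S.m := by
        rw [← whiskerLeft_ml_whiskerRight, S.hc12]
    _ = wl S.t₂ ▷ A ≫ (rebracket A).hom ≫ A ◁ (A ◁ S.m ≫ S.m) := by
        rw [rebracket_whiskerLeft_mul S.mul_assoc, comp_whiskerRight, assoc,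
          associator_naturality_middle_assoc]
    _ = (rebracket A).hom ≫ A ◁ A ◁ S.m ≫ wl S.t₂ ≫ A ◁ S.m := by
        rw [reassoc_of% wl_whiskerRight_rebracket]
        simp only [wl, onFirstTwo, MonoidalCategory.whiskerLeft_comp, assoc]
        rw [reassoc_of% (associator_inv_whisker_exchange S.t₂ S.m),
          associator_naturality_right_assoc]
    _ = (rebracket A).hom ≫ A ◁ (A ◁ S.m ≫ S.t₁) ≫ ml S.m := by
        rw [MonoidalCategory.whiskerLeft_comp, assoc, S.hc12]

theorem t₂_eq_of_t₁_eq {S S' : RWMB A 𝒴} (ht₁ : S.t₁ = S'.t₁) (hm : S.m = S'.m) :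
    S.t₂ = S'.t₂ :=
  S.eq_of_wl_mul (by rw [← S.hc12, ht₁, hm, S'.hc12])

theorem wl_e₁_mul {j : A ⟶ 𝟙_ C} (hj : S.t₁ ≫ contractLeft j A = S.m) :
    wl S.e₁ ≫ A ◁ S.m = A ◁ S.t₁ ≫ ml (S.e₁ ≫ contractRight j A) := by
  rw [← wl_whiskerLeft_contractLeft, reassoc_of% S.ax5, ← MonoidalCategory.whiskerLeft_comp, hj]

theorem e₁_eq_of_contractRight_eq {S S' : RWMB A 𝒴} (ht₁ : S.t₁ = S'.t₁) (hm : S.m = S'.m)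
    {j : A ⟶ 𝟙_ C} (hj : S.t₁ ≫ contractLeft j A = S.m)
    (he : S.e₁ ≫ contractRight j A = S'.e₁ ≫ contractRight j A) : S.e₁ = S'.e₁ := by
  apply S.eq_of_wl_mul
  rw [S.wl_e₁_mul hj, he, ht₁, hm, S'.wl_e₁_mul (by rw [← ht₁, hj, hm])]

theorem whiskerLeft_piBarR1c_mul :
    A ◁ S.piBarR1c ≫ S.m = dOne S.m S.t₁ ≫ contractRight S.j A := by
  have ax7 : wl S.t₁ ≫ A ◁ contractLeft S.j A ≫ S.m
      = A ◁ (β_ A A).hom ≫ A ◁ S.piBarR1c ≫ S.m := by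
    rw [piBarR1c, MonoidalCategory.whiskerLeft_comp, assoc]
    exact S.ax7
  rw [reassoc_of% wl_whiskerLeft_contractLeft] at ax7
  rw [dOne_contractRight, opMul, ← reassoc_of% whiskerLeft_braiding_inv_ml, ax7,
    whiskerLeft_inv_hom_assoc]

theorem comp_piBarR1c {f : A ⊗ A ⟶ A ⊗ A} (hf : A ◁ f ≫ dOne S.m S.t₁ = dOne S.m S.t₁) :
    f ≫ S.piBarR1c = S.piBarR1c := by
  apply S.ndl.eq_of_whiskerLeft S.memI
  rw [MonoidalCategory.whiskerLeft_comp, assoc, whiskerLeft_piBarR1c_mul, reassoc_of% hf]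

theorem e₁_eq_of_j_eq {S S' : RWMB A 𝒴} (ht₁ : S.t₁ = S'.t₁) (hm : S.m = S'.m)
    (hj : S.j = S'.j) : S.e₁ = S'.e₁ := by
  have piBarR1c_eq : S.piBarR1c = S'.piBarR1c := by
    apply S.ndl.eq_of_whiskerLeft S.memI
    rw [S.whiskerLeft_piBarR1c_mul, ht₁, hm, hj, S'.whiskerLeft_piBarR1c_mul]
  apply e₁_eq_of_contractRight_eq ht₁ hm S.t₁_contractLeft
  nth_rw 2 [hj]
  exact piBarR1c_eq

section InducedMorphism

variable {g : A ⊗ A ⟶ A ⊗ A} (hg : A ◁ S.m ≫ g = A ◁ S.t₁ ≫ ml S.piBarR2)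
  [Epi (A ◁ S.m ▷ A)]

include hg

theorem wl_g_mul : wl g ≫ A ◁ S.m = A ◁ S.m ≫ g := by
  rw [← cancel_epi (A ◁ S.m ▷ A), ← cancel_epi (α_ A (A ⊗ A) A).hom]
  calc (α_ A (A ⊗ A) A).hom ≫ A ◁ S.m ▷ A ≫ wl g ≫ A ◁ S.m
      = (A ◁ S.m ≫ g) ▷ A ≫ (α_ A A A).hom ≫ A ◁ S.m := by simp [wl]
    _ = (rebracket A).hom ≫ A ◁ (A ◁ S.m ≫ S.t₁) ≫ ml S.piBarR2 := by
        rw [hg, whiskerLeft_ml_whiskerRight, wl_t₁_mul]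
    _ = (rebracket A).hom ≫ A ◁ (A ◁ S.m ≫ S.m) ≫ g := by
        simp only [MonoidalCategory.whiskerLeft_comp, assoc, hg]
    _ = (α_ A (A ⊗ A) A).hom ≫ A ◁ S.m ▷ A ≫ A ◁ S.m ≫ g := by
        rw [reassoc_of% (rebracket_whiskerLeft_mul S.mul_assoc)]

theorem whiskerLeft_e₁_ml : A ◁ S.e₁ ≫ ml S.m = dOne S.m g := by
  apply S.eq_of_whiskerRight_mul
  calc (A ◁ S.e₁ ≫ ml S.m) ▷ A ≫ (α_ A A A).hom ≫ A ◁ S.m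
      = (rebracket A).hom ≫ A ◁ (A ◁ S.t₁ ≫ ml S.piBarR1c) ≫ ml S.m := by
        rw [whiskerLeft_ml_whiskerRight, S.wl_e₁_mul S.t₁_contractLeft]; rfl
    _ = (rebracket A).hom ≫ A ◁ A ◁ S.t₁ ≫ (rebracket A).inv ≫
          (wl (β_ A A).hom ≫ A ◁ S.piBarR2 ≫ opMul S.m) ▷ A := by
        rw [MonoidalCategory.whiskerLeft_comp, assoc, whiskerLeft_ml_ml,
          whiskerLeft_piBarR1c_mul, dOne_contractRight]; rfl
    _ = wl (β_ A A).hom ▷ A ≫ (rebracket A).hom ≫ A ◁ A ◁ S.t₁ ≫ (rebracket A).inv ≫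
          (A ◁ S.piBarR2 ≫ opMul S.m) ▷ A := by
        rw [comp_whiskerRight, reassoc_of% rebracket_inv_wl_whiskerRight,
          reassoc_of% onFirstTwo_exchange, reassoc_of% wl_whiskerRight_rebracket]
    _ = wl (β_ A A).hom ▷ A ≫ (rebracket A).hom ≫ A ◁ (A ◁ S.m ≫ g) ≫ ml (opMul S.m) := by
        rw [hg, MonoidalCategory.whiskerLeft_comp, assoc, whiskerLeft_ml_ml]
    _ = dOne S.m g ▷ A ≫ (α_ A A A).hom ≫ A ◁ S.m := by
        rw [dOne_eq, comp_whiskerRight, assoc, whiskerLeft_ml_whiskerRight, S.wl_g_mul hg]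

theorem g_contractRight : g ≫ contractRight S.j A = S.piBarR2 := by
  have key : wl (β_ A A).hom ≫ A ◁ (g ≫ contractRight S.j A) ≫ opMul S.m
      = wl (β_ A A).hom ≫ A ◁ S.piBarR2 ≫ opMul S.m := by
    calc wl (β_ A A).hom ≫ A ◁ (g ≫ contractRight S.j A) ≫ opMul S.m
        = A ◁ S.piBarR1c ≫ S.m := by
          rw [← dOne_contractRight, ← S.whiskerLeft_e₁_ml hg, assoc, ml_contractRight,
            ← MonoidalCategory.whiskerLeft_comp_assoc]; rfl
      _ = wl (β_ A A).hom ≫ A ◁ S.piBarR2 ≫ opMul S.m := by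
          rw [whiskerLeft_piBarR1c_mul, dOne_contractRight]; rfl
  have : IsIso (wl (β_ A A).hom) := by unfold wl; infer_instance
  exact S.ndr.ndLeftOn_braiding_inv.eq_of_whiskerLeft S.memI ((cancel_epi _).1 key)

theorem g_contractLeft : g ≫ contractLeft S.j A = S.t₂ ≫ contractLeft S.j A := by
  have piBarR2_j : S.piBarR2 ≫ S.j = S.m ≫ S.j := by
    rw [← S.t₁_contractLeft, assoc, contractLeft_comp, ← assoc]; rfl
  have contractLeft_mul (f : A ⊗ A ⟶ A ⊗ A) :
      (α_ A A A).inv ≫ (f ≫ contractLeft S.j A) ▷ A ≫ S.m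
        = wl f ≫ A ◁ S.m ≫ contractLeft S.j A := by
    rw [whiskerLeft_contractLeft, reassoc_of% wl_contractLeft, ml, assoc]
  apply S.ndr.eq_of_whiskerRight S.memI
  rw [← cancel_epi (α_ A A A).inv, contractLeft_mul, contractLeft_mul,
    reassoc_of% (S.wl_g_mul hg), reassoc_of% hg, ml_contractLeft, piBarR2_j, ← ml_contractLeft,
    reassoc_of% S.hc12]

theorem ml_opMul_e₁ : ml (opMul S.m) ≫ S.e₁ = A ◁ S.e₁ ≫ ml (opMul S.m) := by
  apply S.eq_of_whiskerLeft_ml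
  rw [whiskerLeft_ml_opMul_ml S.mul_assoc, MonoidalCategory.whiskerLeft_comp, assoc,
    S.whiskerLeft_e₁_ml hg, whiskerLeft_ml_opMul_dOne S.mul_assoc]

theorem dOne_t₁_e₁ : dOne S.m S.t₁ ≫ S.e₁ = dOne S.m S.t₁ := by
  rw [dOne_eq, assoc, assoc, S.ml_opMul_e₁ hg, ← MonoidalCategory.whiskerLeft_comp_assoc, S.ax3]

end InducedMorphism

section Uniqueness

variable {S S' : RWMB A 𝒴} {g g' : A ⊗ A ⟶ A ⊗ A} [Epi (A ◁ S.m ▷ A)]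
  (hg : A ◁ S.m ≫ g = A ◁ S.t₁ ≫ ml S.piBarR2)
  (hg' : A ◁ S'.m ≫ g' = A ◁ S'.t₁ ≫ ml S'.piBarR2)

include hg hg'

theorem e₁_eq_iff_g_eq (hm : S.m = S'.m) : S.e₁ = S'.e₁ ↔ g = g' := by
  have : Epi (A ◁ S'.m ▷ A) := hm ▸ inferInstance
  have e₁_g := S.whiskerLeft_e₁_ml hg
  have e₁_g' := S'.whiskerLeft_e₁_ml hg'
  rw [← hm] at e₁_g'
  constructor
  · intro he
    have : IsIso (wl (β_ A A).hom) := by unfold wl; infer_instance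
    apply S.eq_of_whiskerLeft_ml_opMul
    rw [← cancel_epi (wl (β_ A A).hom), ← dOne_eq, ← dOne_eq, ← e₁_g, ← e₁_g', he]
  · intro h
    apply S.eq_of_whiskerLeft_ml
    rw [e₁_g, e₁_g', h]

theorem j_eq_of_g_eq (ht₁ : S.t₁ = S'.t₁) (hm : S.m = S'.m) [Epi S.m] (h : g = g') :
    S.j = S'.j := by
  have : Epi (A ◁ S'.m ▷ A) := hm ▸ inferInstance
  rw [← cancel_epi S.m]
  subst h
  have g_contract : S.t₂ ≫ contractLeft S.j A ≫ S'.j = S.t₁ ≫ contractRight S'.j A ≫ S.j := by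
    rw [← reassoc_of% (S.g_contractLeft hg), contractLeft_comp,
      reassoc_of% (S'.g_contractRight hg'), piBarR2, assoc, ← ht₁]
    rfl
  calc S.m ≫ S.j
      = S.t₂ ≫ contractRight S'.j A ≫ S.j := by
        rw [hm, ← S'.t₂_contractRight, assoc, t₂_eq_of_t₁_eq ht₁ hm]
    _ = S.t₁ ≫ contractLeft S.j A ≫ S'.j := by
        rw [← contractLeft_comp, g_contract, contractLeft_comp]
    _ = S.m ≫ S'.j := by rw [reassoc_of% S.t₁_contractLeft]

theorem e₁_eq_of_epi_dOne (ht₁ : S.t₁ = S'.t₁) (hm : S.m = S'.m) {E : C} {p : A ⊗ A ⟶ E}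
    {i : E ⟶ A ⊗ A} (hpi : p ≫ i = S.e₁) [Epi (dOne S.m S.t₁ ≫ p)] : S.e₁ = S'.e₁ := by
  have : Epi (A ◁ S'.m ▷ A) := hm ▸ inferInstance
  have dOne_e₁' : dOne S.m S.t₁ ≫ S'.e₁ = dOne S.m S.t₁ := by
    rw [ht₁, hm, S'.dOne_t₁_e₁ hg']
  have i_e₁' : i ≫ S'.e₁ = i := by
    rw [← cancel_epi (dOne S.m S.t₁ ≫ p), assoc, assoc, reassoc_of% hpi,
      reassoc_of% (S.dOne_t₁_e₁ hg), dOne_e₁', hpi, S.dOne_t₁_e₁ hg]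
  have e₁_e₁' : S.e₁ ≫ S'.e₁ = S.e₁ := by rw [← hpi, assoc, i_e₁']
  have e₁_dOne : A ◁ S.e₁ ≫ dOne S'.m S'.t₁ = dOne S'.m S'.t₁ := by
    rw [← ht₁, ← hm]
    exact S.ax4
  apply e₁_eq_of_contractRight_eq ht₁ hm (j := S'.j) (by rw [ht₁, S'.t₁_contractLeft, hm])
  calc S.e₁ ≫ contractRight S'.j A
      = S.e₁ ≫ S'.e₁ ≫ contractRight S'.j A := by rw [reassoc_of% e₁_e₁']
    _ = S'.e₁ ≫ contractRight S'.j A := S'.comp_piBarR1c e₁_dOne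

end Uniqueness

end RWMB

theorem theorem_uniqueness_of_e_and_j_general {A : C} {𝒴 : Set C} (S S' : RWMB A 𝒴)
    (ht₁ : S.t₁ = S'.t₁) (hm : S.m = S'.m) [Epi S.m] [Epi (A ◁ S.m ▷ A)] (g g' : A ⊗ A ⟶ A ⊗ A)
    (hg : A ◁ S.m ≫ g = A ◁ S.t₁ ≫ ml S.piBarR2)
    (hg' : A ◁ S'.m ≫ g' = A ◁ S'.t₁ ≫ ml S'.piBarR2) :
    ((S.e₁ = S'.e₁ ↔ S.e₂ = S'.e₂) ∧ (S.e₁ = S'.e₁ ↔ g = g') ∧ (S.e₁ = S'.e₁ ↔ S.j = S'.j)) ∧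
    ∀ {E : C} {p : A ⊗ A ⟶ E} {i : E ⟶ A ⊗ A}, p ≫ i = S.e₁ →
      Epi (dOne S.m S.t₁ ≫ p) → S.e₁ = S'.e₁ := by
  have e₁_iff_g := RWMB.e₁_eq_iff_g_eq hg hg' hm
  refine ⟨⟨RWMB.e₁_eq_iff_e₂_eq hm, e₁_iff_g, fun he => ?_, RWMB.e₁_eq_of_j_eq ht₁ hm⟩, ?_⟩
  · exact RWMB.j_eq_of_g_eq hg hg' ht₁ hm (e₁_iff_g.1 he)
  · exact fun hpi _ => RWMB.e₁_eq_of_epi_dOne hg hg' ht₁ hm hpi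

/-- uniqueness of the idempotents and the counit: for two regular weak
multiplier bimonoid structures on `A` sharing `t₁, t₂, t₃, t₄` and the (regular
epimorphic, non-degenerate) multiplication, the conditions `e₁ = e₁'`, `e₂ = e₂'`,
`g = g'` and `j = j'` are equivalent; and they hold if idempotents in `C` split and
the morphisms `d̂₁` of both structures are epimorphisms. -/
theorem theorem_uniqueness_of_e_and_j
    (presL : ∀ X : C, PreservesColimitsOfShape WalkingParallelPair (tensorLeft X))
    (presR : ∀ X : C, PreservesColimitsOfShape WalkingParallelPair (tensorRight X))
    {A : C} {𝒴 : Set C} (S S' : RWMB A 𝒴)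
    (ht₁ : S.t₁ = S'.t₁) (ht₂ : S.t₂ = S'.t₂)
    (ht₃ : S.t₃ = S'.t₃) (ht₄ : S.t₄ = S'.t₄)
    (hm : S.m = S'.m)
    (hmreg : Nonempty (RegularEpi S.m))
    -- the morphisms of Lemma 5.1 for the two structures
    (g g' : A ⊗ A ⟶ A ⊗ A)
    (hg : (A ◁ S.m) ≫ g = (A ◁ S.t₁) ≫ ml S.piBarR2)
    (hg' : (A ◁ S'.m) ≫ g' = (A ◁ S'.t₁) ≫ ml S'.piBarR2) :
    -- (i) ↔ (ii) ↔ (iii) ↔ (iv)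
    ((S.e₁ = S'.e₁ ↔ S.e₂ = S'.e₂) ∧
     (S.e₁ = S'.e₁ ↔ g = g') ∧
     (S.e₁ = S'.e₁ ↔ S.j = S'.j)) ∧
    -- the equivalent conditions hold if idempotents split and both `d̂₁` are epi
    (IsIdempotentComplete C →
      ∀ (E₁ : C) (eHat₁ : A ⊗ A ⟶ E₁) (eCheck₁ : E₁ ⟶ A ⊗ A),
        eHat₁ ≫ eCheck₁ = S.e₁ → eCheck₁ ≫ eHat₁ = 𝟙 E₁ →
      ∀ (E₁' : C) (eHat₁' : A ⊗ A ⟶ E₁') (eCheck₁' : E₁' ⟶ A ⊗ A),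
        eHat₁' ≫ eCheck₁' = S'.e₁ → eCheck₁' ≫ eHat₁' = 𝟙 E₁' →
        Epi (dOne S.m S.t₁ ≫ eHat₁) → Epi (dOne S'.m S'.t₁ ≫ eHat₁') →
        S.e₁ = S'.e₁) := by
  have := presL A
  have := presR A
  have : Epi S.m := hmreg.some.epi
  have : Epi (A ◁ S.m ▷ A) :=
    epi_map_of_regularEpi (tensorRight A ⋙ tensorLeft A) hmreg.some
  obtain ⟨equivalences, e₁_eq⟩ := theorem_uniqueness_of_e_and_j_general S S' ht₁ hm g g' hg hg'
  exact ⟨equivalences, fun _ _ _ _ hpi _ _ _ _ _ _ hp _ => e₁_eq hpi hp⟩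

end WeakMultiplierBimonoid
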